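/- arXiv:1805.10439 — 10 statements merged into one kernel-verified Lean document; each statement's English description precedes it below -/
import Mathlib

section
/- Let μ ∈ ℝ, let h : ℝ → ℝ be smooth with h'(x) ≠ 0 for all x, and let a₀, a₁, a₂, a₃, a₄ : ℝ → ℝ be smooth. Define F(x,y,p_x,p_y) = e^{μy}·Σ_{k=0}^{4} a_k(x)·p_x^{4−k}·p_y^{k} and H(x,y,p_x,p_y) = (1/2)h'(x)²(p_x²+p_y²). Then {F,H} = 0 identically on ℝ⁴ if and only if for every x ∈ ℝ the following six equations hold: a₀'h' − 4a₀h'' = 0; μa₀h' + a₁'h' − 3a₁h'' = 0; μa₁h' + a₂'h' − 4a₀h'' − 2a₂h'' = 0; μa₂h' + a₃'h' − 3a₁h'' − a₃h'' = 0; μa₃h' + a₄'h' − 2a₂h'' = 0; μa₄h' − a₃h'' = 0. -/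
/-- Canonical Poisson bracket on ℝ⁴ with coordinates (x, y, pₓ, p_y). -/
noncomputable def pb (F G : ℝ → ℝ → ℝ → ℝ → ℝ) (x y px py : ℝ) : ℝ :=
    deriv (fun t => F x y t py) px * deriv (fun t => G t y px py) x
  - deriv (fun t => F t y px py) x * deriv (fun t => G x y t py) px
  + deriv (fun t => F x y px t) py * deriv (fun t => G x t px py) y
  - deriv (fun t => F x t px py) y * deriv (fun t => G x y px t) py

theorem stmt_1 (μ : ℝ) (h a0 a1 a2 a3 a4 : ℝ → ℝ)
    (hh : ContDiff ℝ (⊤ : ℕ∞) h) (hhx : ∀ x, deriv h x ≠ 0)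
    (ha0 : ContDiff ℝ (⊤ : ℕ∞) a0) (ha1 : ContDiff ℝ (⊤ : ℕ∞) a1)
    (ha2 : ContDiff ℝ (⊤ : ℕ∞) a2) (ha3 : ContDiff ℝ (⊤ : ℕ∞) a3) (ha4 : ContDiff ℝ (⊤ : ℕ∞) a4) :
    (∀ x y px py : ℝ,
      pb (fun x y px py => Real.exp (μ * y) *
           (a0 x * px^4 + a1 x * px^3 * py + a2 x * px^2 * py^2
            + a3 x * px * py^3 + a4 x * py^4))
         (fun x _y px py => (1/2) * (deriv h x)^2 * (px^2 + py^2))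
         x y px py = 0)
    ↔ (∀ x : ℝ,
        deriv a0 x * deriv h x - 4 * a0 x * deriv (deriv h) x = 0
      ∧ μ * a0 x * deriv h x + deriv a1 x * deriv h x - 3 * a1 x * deriv (deriv h) x = 0
      ∧ μ * a1 x * deriv h x + deriv a2 x * deriv h x
          - 4 * a0 x * deriv (deriv h) x - 2 * a2 x * deriv (deriv h) x = 0
      ∧ μ * a2 x * deriv h x + deriv a3 x * deriv h x
          - 3 * a1 x * deriv (deriv h) x - a3 x * deriv (deriv h) x = 0
      ∧ μ * a3 x * deriv h x + deriv a4 x * deriv h x - 2 * a2 x * deriv (deriv h) x = 0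
      ∧ μ * a4 x * deriv h x - a3 x * deriv (deriv h) x = 0) := by
  have key : ∀ x y px py : ℝ,
      pb (fun x y px py => Real.exp (μ * y) *
           (a0 x * px^4 + a1 x * px^3 * py + a2 x * px^2 * py^2
            + a3 x * px * py^3 + a4 x * py^4))
         (fun x _y px py => (1/2) * (deriv h x)^2 * (px^2 + py^2))
         x y px py = -(Real.exp (μ * y) * deriv h x) *
        ((deriv a0 x * deriv h x - 4 * a0 x * deriv (deriv h) x) * px^5
        + (μ * a0 x * deriv h x + deriv a1 x * deriv h x
          - 3 * a1 x * deriv (deriv h) x) * px^4 * py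
        + (μ * a1 x * deriv h x + deriv a2 x * deriv h x
          - 4 * a0 x * deriv (deriv h) x - 2 * a2 x * deriv (deriv h) x) * px^3 * py^2
        + (μ * a2 x * deriv h x + deriv a3 x * deriv h x
          - 3 * a1 x * deriv (deriv h) x - a3 x * deriv (deriv h) x) * px^2 * py^3
        + (μ * a3 x * deriv h x + deriv a4 x * deriv h x
          - 2 * a2 x * deriv (deriv h) x) * px * py^4
        + (μ * a4 x * deriv h x - a3 x * deriv (deriv h) x) * py^5) := by
    intro x y px py
    have hd : ∀ {f : ℝ → ℝ}, ContDiff ℝ (⊤ : ℕ∞) f → HasDerivAt f (deriv f x) x :=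
      fun hf => (hf.differentiable (by simp) x).hasDerivAt
    have hh' : ContDiff ℝ (⊤ : ℕ∞) (deriv h) := (contDiff_infty_iff_deriv.mp hh).2
    have i := hasDerivAt_id' px
    have j := hasDerivAt_id' py
    have e1 := ((((((i.pow 4).const_mul (a0 x)).add
      (((i.pow 3).const_mul (a1 x)).mul_const py)).add
      (((i.pow 2).const_mul (a2 x)).mul_const (py^2))).add
      ((i.const_mul (a3 x)).mul_const (py^3))).add
      (hasDerivAt_const px (a4 x * py^4))).const_mul (Real.exp (μ * y))
    have e2 := (((((((hd ha0).mul_const (px^4)).add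
      (((hd ha1).mul_const (px^3)).mul_const py)).add
      (((hd ha2).mul_const (px^2)).mul_const (py^2))).add
      (((hd ha3).mul_const px).mul_const (py^3))).add
      ((hd ha4).mul_const (py^4)))).const_mul (Real.exp (μ * y))
    have e3 := (((hasDerivAt_id' y).const_mul μ).exp).mul_const
      (a0 x * px^4 + a1 x * px^3 * py + a2 x * px^2 * py^2
            + a3 x * px * py^3 + a4 x * py^4)
    have g1 := (((hd hh').pow 2).const_mul (1/2)).mul_const (px^2 + py^2)
    have g2 := ((i.pow 2).add_const (py^2)).const_mul ((1/2) * (deriv h x)^2)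
    have g3 := ((j.pow 2).const_add (px^2)).const_mul ((1/2) * (deriv h x)^2)
    have E1 := e1.deriv
    have E2 := e2.deriv
    have E3 := e3.deriv
    have G1 := g1.deriv
    have G2 := g2.deriv
    have G3 := g3.deriv
    simp only [Pi.add_def, Pi.pow_def, Pi.mul_def] at E1 E2 E3 G1 G2 G3
    unfold pb
    simp only [deriv_const]
    rw [E1, E2, E3, G1, G2, G3]
    push_cast
    ring
  constructor
  · intro H x
    have P : ∀ px py : ℝ, _ := fun px py =>
      (mul_eq_zero.mp ((key x 0 px py).symm.trans (H x 0 px py))).resolve_left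
        (neg_ne_zero.mpr (mul_ne_zero (Real.exp_pos _).ne' (hhx x)))
    have p0 := P 1 0
    have p1 := P 0 1
    have p2 := P 1 1
    have p3 := P 1 (-1)
    have p4 := P 1 2
    have p5 := P 1 (-2)
    refine ⟨?_, ?_, ?_, ?_, ?_, ?_⟩ <;> linarith
  · intro H x y px py
    obtain ⟨h0, h1, h2, h3, h4, h5⟩ := H x
    rw [key, h0, h1, h2, h3, h4, h5]
    ring
end

section
/- Let μ ∈ ℝ, μ ≠ 0, let h : ℝ → ℝ be smooth with h'(x) ≠ 0 for all x, and let a₀, a₁, a₂ : ℝ → ℝ be smooth functions satisfying, for all x ∈ ℝ: a₀'h' − 4a₀h'' = 0; μa₀h' + a₁'h' − 3a₁h'' = 0; μa₁h' + a₂'h' − 4a₀h'' − 2a₂h'' = 0. Then there exist real constants A₀, A₁, A₂ such that for all x ∈ ℝ: a₀(x) = (A₀/μ)h'(x)⁴, a₁(x) = (A₁ − A₀h(x))h'(x)³, and a₂(x) = ((1/2)μA₀h(x)² + (2A₀/μ)h'(x)² − μA₁h(x) + A₂/μ)·h'(x)². -/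
theorem stmt_2 (μ : ℝ) (hμ : μ ≠ 0) (h a0 a1 a2 : ℝ → ℝ)
    (hh : ContDiff ℝ (⊤ : ℕ∞) h) (hhx : ∀ x, deriv h x ≠ 0)
    (ha0 : ContDiff ℝ (⊤ : ℕ∞) a0) (ha1 : ContDiff ℝ (⊤ : ℕ∞) a1) (ha2 : ContDiff ℝ (⊤ : ℕ∞) a2)
    (heq1 : ∀ x : ℝ, deriv a0 x * deriv h x - 4 * a0 x * deriv (deriv h) x = 0)
    (heq2 : ∀ x : ℝ,
      μ * a0 x * deriv h x + deriv a1 x * deriv h x - 3 * a1 x * deriv (deriv h) x = 0)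
    (heq3 : ∀ x : ℝ,
      μ * a1 x * deriv h x + deriv a2 x * deriv h x
        - 4 * a0 x * deriv (deriv h) x - 2 * a2 x * deriv (deriv h) x = 0) :
    ∃ A0 A1 A2 : ℝ, ∀ x : ℝ,
      a0 x = A0 / μ * (deriv h x)^4
      ∧ a1 x = (A1 - A0 * h x) * (deriv h x)^3
      ∧ a2 x = ((1/2) * μ * A0 * (h x)^2 + 2 * A0 / μ * (deriv h x)^2
                 - μ * A1 * h x + A2 / μ) * (deriv h x)^2 := by
  have hg : ContDiff ℝ (⊤ : ℕ∞) (deriv h) := by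
    have : ContDiff ℝ ((⊤ : ℕ∞) + 1) h := by simpa using hh
    exact (contDiff_succ_iff_deriv.1 this).2.2
  have dh : ∀ x, HasDerivAt h (deriv h x) x := fun x => (hh.differentiable (by simp) x).hasDerivAt
  have dg : ∀ x, HasDerivAt (deriv h) (deriv (deriv h) x) x :=
    fun x => (hg.differentiable (by simp) x).hasDerivAt
  have d0 : ∀ x, HasDerivAt a0 (deriv a0 x) x := fun x => (ha0.differentiable (by simp) x).hasDerivAt
  have d1 : ∀ x, HasDerivAt a1 (deriv a1 x) x := fun x => (ha1.differentiable (by simp) x).hasDerivAt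
  have d2 : ∀ x, HasDerivAt a2 (deriv a2 x) x := fun x => (ha2.differentiable (by simp) x).hasDerivAt
  have const : ∀ f : ℝ → ℝ, (∀ x, HasDerivAt f 0 x) → ∃ c, ∀ x, f x = c := fun f hf =>
    ⟨f 0, fun x => is_const_of_deriv_eq_zero (fun y => (hf y).differentiableAt)
      (fun y => (hf y).deriv) x 0⟩
  obtain ⟨c, hc⟩ := const (fun x => a0 x / (deriv h x)^4) (fun x => by
    have e := heq1 x
    have n := hhx x
    refine ((d0 x).div ((dg x).pow 4) (pow_ne_zero 4 n)).congr_deriv ?_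
    rw [div_eq_zero_iff]
    left
    push_cast
    simp only [Pi.pow_apply]
    linear_combination (deriv h x)^3 * e)
  have hc' : ∀ x, a0 x = c * (deriv h x)^4 := fun x => by
    rw [← hc x]; have n := hhx x; field_simp
  obtain ⟨b, hb⟩ := const (fun x => a1 x / (deriv h x)^3 + μ * c * h x) (fun x => by
    have e := heq2 x
    have n := hhx x
    refine (((d1 x).div ((dg x).pow 3) (pow_ne_zero 3 n)).add ((dh x).const_mul (μ * c))).congr_deriv ?_
    rw [hc' x] at e
    push_cast
    simp only [Pi.pow_apply]
    field_simp
    linear_combination e)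
  have hb' : ∀ x, a1 x = (b - μ * c * h x) * (deriv h x)^3 := fun x => by
    rw [← hb x]; have n := hhx x; field_simp; ring
  obtain ⟨d, hd⟩ := const (fun x => a2 x / (deriv h x)^2 - (μ^2 * c / 2) * (h x)^2
      - (2 * c) * (deriv h x)^2 + (μ * b) * h x) (fun x => by
    have e := heq3 x
    have n := hhx x
    refine (((((d2 x).div ((dg x).pow 2) (pow_ne_zero 2 n)).sub
      (((dh x).pow 2).const_mul (μ^2 * c / 2))).sub (((dg x).pow 2).const_mul (2 * c))).add
      ((dh x).const_mul (μ * b))).congr_deriv ?_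
    rw [hc' x, hb' x] at e
    push_cast
    simp only [Pi.pow_apply]
    field_simp
    linear_combination e)
  refine ⟨μ * c, b, μ * d, fun x => ⟨?_, ?_, ?_⟩⟩
  · rw [hc' x]; field_simp
  · exact hb' x
  · rw [← hd x]; have n := hhx x; field_simp; ring
end

section
/- Let μ ∈ ℝ, μ ≠ 0, let A₀, A₁, A₂ ∈ ℝ, let h : ℝ → ℝ be smooth with h'(x) ≠ 0 for all x, and define a₀(x) = (A₀/μ)h'⁴, a₁(x) = (A₁ − A₀h)h'³, a₂(x) = ((1/2)μA₀h² + (2A₀/μ)h'² − μA₁h + A₂/μ)h'². Suppose a₃, a₄ : ℝ → ℝ are smooth and satisfy, for all x ∈ ℝ: μa₂h' + a₃'h' − 3a₁h'' − a₃h'' = 0; μa₃h' + a₄'h' − 2a₂h'' = 0; μa₄h' − a₃h'' = 0. Define the complex-valued function G(x) = (h''(x)/(μh'(x)) − i)·a₃(x) − ((1/2)μA₀h(x)² + (A₀/μ)h'(x)² − μA₁h(x) + A₂/μ)·h'(x)² + i(A₁ − A₀h(x))h'(x)³. Then the function x ↦ e^{iμx}·G(x) is constant on ℝ. -/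
theorem stmt_3 (μ A0 A1 A2 : ℝ) (hμ : μ ≠ 0) (h a3 a4 : ℝ → ℝ)
    (hh : ContDiff ℝ (⊤ : ℕ∞) h) (hhx : ∀ x, deriv h x ≠ 0)
    (ha3 : ContDiff ℝ (⊤ : ℕ∞) a3) (ha4 : ContDiff ℝ (⊤ : ℕ∞) a4)
    -- a₀, a₁, a₂ are given by the formulas of Statement 2 and substituted below
    (heq4 : ∀ x : ℝ,
      μ * (((1/2) * μ * A0 * (h x)^2 + 2 * A0 / μ * (deriv h x)^2
              - μ * A1 * h x + A2 / μ) * (deriv h x)^2) * deriv h x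
        + deriv a3 x * deriv h x
        - 3 * ((A1 - A0 * h x) * (deriv h x)^3) * deriv (deriv h) x
        - a3 x * deriv (deriv h) x = 0)
    (heq5 : ∀ x : ℝ,
      μ * a3 x * deriv h x + deriv a4 x * deriv h x
        - 2 * (((1/2) * μ * A0 * (h x)^2 + 2 * A0 / μ * (deriv h x)^2
                  - μ * A1 * h x + A2 / μ) * (deriv h x)^2) * deriv (deriv h) x = 0)
    (heq6 : ∀ x : ℝ,
      μ * a4 x * deriv h x - a3 x * deriv (deriv h) x = 0) :
    ∃ c : ℂ, ∀ x : ℝ,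
      Complex.exp (Complex.I * (μ : ℂ) * (x : ℂ)) *
        ( ((((deriv (deriv h) x) / (μ * deriv h x) : ℝ) : ℂ) - Complex.I) * (a3 x : ℂ)
          - ((((1/2) * μ * A0 * (h x)^2 + A0 / μ * (deriv h x)^2
                - μ * A1 * h x + A2 / μ) * (deriv h x)^2 : ℝ) : ℂ)
          + Complex.I * (((A1 - A0 * h x) * (deriv h x)^3 : ℝ) : ℂ) ) = c := by
  have hh' : ContDiff ℝ (⊤ : ℕ∞) (deriv h) := by
    have := (contDiff_infty_iff_deriv (f := h) (𝕜 := ℝ)).1 hh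
    exact this.2
  set R : ℝ → ℝ := fun x => a4 x - ((1/2) * μ * A0 * (h x)^2 + A0 / μ * (deriv h x)^2
                - μ * A1 * h x + A2 / μ) * (deriv h x)^2 with hR
  set S : ℝ → ℝ := fun x => (A1 - A0 * h x) * (deriv h x)^3 - a3 x with hS
  have dh : ∀ x, HasDerivAt h (deriv h x) x := fun x =>
    (hh.differentiable (by simp) x).hasDerivAt
  have dh' : ∀ x, HasDerivAt (deriv h) (deriv (deriv h) x) x := fun x =>
    (hh'.differentiable (by simp) x).hasDerivAt
  have d3 : ∀ x, HasDerivAt a3 (deriv a3 x) x := fun x =>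
    (ha3.differentiable (by simp) x).hasDerivAt
  have d4 : ∀ x, HasDerivAt a4 (deriv a4 x) x := fun x =>
    (ha4.differentiable (by simp) x).hasDerivAt
  have dR : ∀ x, HasDerivAt R (μ * S x) x := by
    intro x
    have key := (d4 x).sub (((((((dh x).pow 2).const_mul ((1/2) * μ * A0)).add
      (((dh' x).pow 2).const_mul (A0 / μ))).sub ((dh x).const_mul (μ * A1))).add_const
        (A2 / μ)).mul ((dh' x).pow 2))
    refine key.congr_deriv ?_
    apply mul_right_cancel₀ (hhx x)
    have e := heq5 x
    simp [hS, -mul_eq_mul_right_iff]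
    field_simp at e ⊢
    linear_combination e
  have dS : ∀ x, HasDerivAt S (-(μ * R x)) x := by
    intro x
    have key := ((((dh x).const_mul A0).const_sub A1).mul ((dh' x).pow 3)).sub (d3 x)
    refine key.congr_deriv ?_
    apply mul_right_cancel₀ (hhx x)
    have e := heq4 x
    have e6 := heq6 x
    simp [hR]
    field_simp at e ⊢
    linear_combination (-1) * e + 2 * e6
  have dF : ∀ x : ℝ, HasDerivAt (fun x : ℝ => Complex.exp (Complex.I * (μ : ℂ) * (x : ℂ)) *
      ((R x : ℂ) + Complex.I * (S x : ℂ))) 0 x := by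
    intro x
    have k1 := (((Complex.ofRealCLM.hasDerivAt (x := x)).const_mul (Complex.I * (μ : ℂ))).cexp).mul
      ((dR x).ofReal_comp.add ((dS x).ofReal_comp.const_mul Complex.I))
    refine k1.congr_deriv ?_
    simp
    linear_combination (μ : ℂ) * S x * Complex.exp (Complex.I * (μ : ℂ) * (x : ℂ)) * Complex.I_sq
  refine ⟨Complex.exp (Complex.I * (μ : ℂ) * ((0:ℝ) : ℂ)) *
      ((R 0 : ℂ) + Complex.I * (S 0 : ℂ)), fun x => ?_⟩
  rw [← is_const_of_deriv_eq_zero (fun x => (dF x).differentiableAt) (fun x => (dF x).deriv) x 0]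
  have e6 : (deriv (deriv h) x) / (μ * deriv h x) * a3 x = a4 x := by
    have := heq6 x
    have := hhx x
    field_simp
    linarith
  simp only [hR, hS]
  rw [← e6]
  push_cast
  ring
end

section
/- Let μ ∈ ℝ, μ ≠ 0, let A₀, A₁, A₂, A₃, A₄ ∈ ℝ, and let h : ℝ → ℝ be smooth with h'(x) ≠ 0 for all x. Suppose h satisfies the trigonometric second-order equation for all x ∈ ℝ: ((A₀h − A₁)h'³ + A₃cos(μx) + (A₄/μ)sin(μx))·h'' + A₀h'⁵ + ((μ²/2)A₀h² − μ²A₁h + A₂)·h'³ + μ(A₃sin(μx) − (A₄/μ)cos(μx))·h' = 0. Then there exists a real constant A₆ such that for all x ∈ ℝ: (A₀h − A₁)²h'³ + ((μ/2)(A₀h − 2A₁)h·((μ/2)(A₀h − 2A₁)h + 2A₂/μ) + (2A₀/μ)(A₃sin(μx) − (A₄/μ)cos(μx)) + A₆/(4μ²))·h' − 2(A₀h − A₁)(A₃cos(μx) + (A₄/μ)sin(μx)) = 0. -/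
theorem stmt_5 (μ A0 A1 A2 A3 A4 : ℝ) (hμ : μ ≠ 0) (h : ℝ → ℝ)
    (hh : ContDiff ℝ (⊤ : ℕ∞) h) (hhx : ∀ x, deriv h x ≠ 0)
    (hode : ∀ x : ℝ,
      ((A0 * h x - A1) * (deriv h x)^3
          + A3 * Real.cos (μ * x) + A4 / μ * Real.sin (μ * x)) * deriv (deriv h) x
        + A0 * (deriv h x)^5
        + (μ^2 / 2 * A0 * (h x)^2 - μ^2 * A1 * h x + A2) * (deriv h x)^3
        + μ * (A3 * Real.sin (μ * x) - A4 / μ * Real.cos (μ * x)) * deriv h x = 0) :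
    ∃ A6 : ℝ, ∀ x : ℝ,
      (A0 * h x - A1)^2 * (deriv h x)^3
        + (μ / 2 * (A0 * h x - 2 * A1) * h x
              * (μ / 2 * (A0 * h x - 2 * A1) * h x + 2 * A2 / μ)
            + 2 * A0 / μ * (A3 * Real.sin (μ * x) - A4 / μ * Real.cos (μ * x))
            + A6 / (4 * μ^2))
          * deriv h x
        - 2 * (A0 * h x - A1)
            * (A3 * Real.cos (μ * x) + A4 / μ * Real.sin (μ * x)) = 0 := by
  have hd : Differentiable ℝ h := hh.differentiable (by simp)
  have hd2 : Differentiable ℝ (deriv h) :=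
    ((contDiff_infty_iff_deriv.1 hh).2).differentiable (by simp)
  let F : ℝ → ℝ := fun x => (A0 * h x - A1)^2 * (deriv h x)^2
        + (μ / 2 * (A0 * h x - 2 * A1) * h x)
              * (μ / 2 * (A0 * h x - 2 * A1) * h x + 2 * A2 / μ)
            + 2 * A0 / μ * (A3 * Real.sin (μ * x) - A4 / μ * Real.cos (μ * x))
        - 2 * (A0 * h x - A1)
            * (A3 * Real.cos (μ * x) + A4 / μ * Real.sin (μ * x)) / deriv h x
  have hF : ∀ x, HasDerivAt F 0 x := by
    intro x
    have h1 : HasDerivAt h (deriv h x) x := (hd x).hasDerivAt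
    have h2 : HasDerivAt (deriv h) (deriv (deriv h) x) x := (hd2 x).hasDerivAt
    have hm : HasDerivAt (fun x : ℝ => μ * x) μ x := by
      simpa using (hasDerivAt_id x).const_mul μ
    have hs := hm.sin
    have hc := hm.cos
    have hu := (h1.const_mul A0).sub_const A1
    have hq := (((h1.const_mul A0).sub_const (2 * A1)).const_mul (μ / 2)).mul h1
    have hS := ((hs.const_mul A3).sub (hc.const_mul (A4 / μ))).const_mul (2 * A0 / μ)
    have hC := (hc.const_mul A3).add (hs.const_mul (A4 / μ))
    have key := ((((hu.pow 2).mul (h2.pow 2)).add (hq.mul (hq.add_const (2 * A2 / μ)))).add hS).sub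
      (((hu.const_mul 2).mul hC).div h2 (hhx x))
    refine key.congr_deriv ?_
    have ho := hode x
    have hp := hhx x
    simp only [Pi.mul_apply, Pi.add_apply, Pi.sub_apply, Pi.pow_apply]
    generalize deriv (deriv h) x = r at *
    generalize deriv h x = p at *
    generalize h x = y at *
    generalize Real.sin (μ * x) = s at *
    generalize Real.cos (μ * x) = c at *
    have e : (0:ℝ) = 2 * (A0 * y - A1) / p ^ 2 * 0 := by simp
    rw [e, ← ho]
    field_simp
    ring
  refine ⟨-(4 * μ^2) * F 0, fun x => ?_⟩
  have hx : F x = F 0 := is_const_of_deriv_eq_zero (fun x => (hF x).differentiableAt)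
    (fun x => (hF x).deriv) x 0
  rw [← hx]
  have hp := hhx x
  simp only [F]
  field_simp
  ring
end

section
/- Let μ ∈ ℝ, μ ≠ 0, let A₀, A₁, A₂, A₃, A₄ ∈ ℝ, and let h : ℝ → ℝ be smooth with h'(x) ≠ 0 for all x, satisfying for all x ∈ ℝ the hyperbolic second-order equation ((A₀h − A₁)h'³ + A₃cosh(μx) + (A₄/μ)sinh(μx))·h'' + A₀h'⁵ + (−(μ²/2)A₀h² + μ²A₁h + A₂)·h'³ − μ(A₃sinh(μx) + (A₄/μ)cosh(μx))·h' = 0. Define a₀ = −(A₀/μ)h'⁴, a₁ = (A₁ − A₀h)h'³, a₂ = ((1/2)μA₀h² − (2A₀/μ)h'² − μA₁h − A₂/μ)h'², a₃ = (A₁ − A₀h)h'³ − (A₃cosh(μx) + (A₄/μ)sinh(μx)), a₄ = ((μ/2)(A₀h − 2A₁)h − (A₀/μ)h'² − A₂/μ)h'² + (A₃sinh(μx) + (A₄/μ)cosh(μx)). Then for every C_e, φ₀ ∈ ℝ the function F = C_e·cos(μy + φ₀)·(a₀(x)p_x⁴ + a₂(x)p_x²p_y² + a₄(x)p_y⁴)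 + C_e·sin(μy + φ₀)·(a₁(x)p_x³p_y + a₃(x)p_xp_y³) satisfies {F, H} = 0 identically on ℝ⁴, where H = (1/2)h'(x)²(p_x²+p_y²). -/
/-- Coefficients of the quartic integral in the hyperbolic case. -/
noncomputable def hypA0 (μ A0 : ℝ) (h : ℝ → ℝ) (x : ℝ) : ℝ := -(A0 / μ) * (deriv h x)^4

noncomputable def hypA1 (A0 A1 : ℝ) (h : ℝ → ℝ) (x : ℝ) : ℝ :=
  (A1 - A0 * h x) * (deriv h x)^3

noncomputable def hypA2 (μ A0 A1 A2 : ℝ) (h : ℝ → ℝ) (x : ℝ) : ℝ :=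
  ((1/2) * μ * A0 * (h x)^2 - 2 * A0 / μ * (deriv h x)^2 - μ * A1 * h x - A2 / μ)
    * (deriv h x)^2

noncomputable def hypA3 (μ A0 A1 A3 A4 : ℝ) (h : ℝ → ℝ) (x : ℝ) : ℝ :=
  (A1 - A0 * h x) * (deriv h x)^3
    - (A3 * Real.cosh (μ * x) + A4 / μ * Real.sinh (μ * x))

noncomputable def hypA4 (μ A0 A1 A2 A3 A4 : ℝ) (h : ℝ → ℝ) (x : ℝ) : ℝ :=
  (μ / 2 * (A0 * h x - 2 * A1) * h x - A0 / μ * (deriv h x)^2 - A2 / μ)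
      * (deriv h x)^2
    + (A3 * Real.sinh (μ * x) + A4 / μ * Real.cosh (μ * x))

theorem stmt_10 (μ A0 A1 A2 A3 A4 : ℝ) (hμ : μ ≠ 0) (h : ℝ → ℝ)
    (hh : ContDiff ℝ (⊤ : ℕ∞) h) (hhx : ∀ x, deriv h x ≠ 0)
    (hode : ∀ x : ℝ,
      ((A0 * h x - A1) * (deriv h x)^3
          + A3 * Real.cosh (μ * x) + A4 / μ * Real.sinh (μ * x)) * deriv (deriv h) x
        + A0 * (deriv h x)^5
        + (-(μ^2 / 2) * A0 * (h x)^2 + μ^2 * A1 * h x + A2) * (deriv h x)^3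
        - μ * (A3 * Real.sinh (μ * x) + A4 / μ * Real.cosh (μ * x)) * deriv h x = 0) :
    ∀ Ce φ0 : ℝ, ∀ x y px py : ℝ,
      pb (fun x y px py =>
            Ce * Real.cos (μ * y + φ0) *
              (hypA0 μ A0 h x * px^4 + hypA2 μ A0 A1 A2 h x * px^2 * py^2
                + hypA4 μ A0 A1 A2 A3 A4 h x * py^4)
            + Ce * Real.sin (μ * y + φ0) *
              (hypA1 A0 A1 h x * px^3 * py + hypA3 μ A0 A1 A3 A4 h x * px * py^3))
         (fun x _y px py => (1/2) * (deriv h x)^2 * (px^2 + py^2))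
         x y px py = 0 := by
  intro Ce φ0 x y px py
  have h1 : HasDerivAt h (deriv h x) x :=
    (hh.differentiable (by simp) x).hasDerivAt
  have hd : ContDiff ℝ (⊤ : ℕ∞) (deriv h) := by
    have := (contDiff_infty_iff_deriv (f := h)).1 hh
    exact this.2
  have h2 : HasDerivAt (deriv h) (deriv (deriv h) x) x :=
    (hd.differentiable (by simp) x).hasDerivAt
  have ode := hode x
  have lin : HasDerivAt (fun t : ℝ => μ * t) μ x := by
    simpa using (hasDerivAt_id x).const_mul μ
  have hC := lin.cosh
  have hS := lin.sinh
  have liny : HasDerivAt (fun t : ℝ => μ * t + φ0) μ y := by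
    simpa using ((hasDerivAt_id y).const_mul μ).add_const φ0
  have hcos := liny.cos
  have hsin := liny.sin
  have a0 : HasDerivAt (hypA0 μ A0 h) _ x := (h2.pow 4).const_mul (-(A0 / μ))
  have a1 : HasDerivAt (hypA1 A0 A1 h) _ x :=
    ((h1.const_mul A0).const_sub A1).mul (h2.pow 3)
  have a2 : HasDerivAt (hypA2 μ A0 A1 A2 h) _ x :=
    (((((h1.pow 2).const_mul ((1/2) * μ * A0)).sub ((h2.pow 2).const_mul (2 * A0 / μ))).sub
      (h1.const_mul (μ * A1))).sub_const (A2 / μ)).mul (h2.pow 2)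
  have a3 : HasDerivAt (hypA3 μ A0 A1 A3 A4 h) _ x :=
    (((h1.const_mul A0).const_sub A1).mul (h2.pow 3)).sub
      ((hC.const_mul A3).add (hS.const_mul (A4 / μ)))
  have a4 : HasDerivAt (hypA4 μ A0 A1 A2 A3 A4 h) _ x :=
    (((((((h1.const_mul A0).sub_const (2 * A1)).const_mul (μ / 2)).mul h1).sub
      ((h2.pow 2).const_mul (A0 / μ))).sub_const (A2 / μ)).mul (h2.pow 2)).add
      ((hS.const_mul A3).add (hC.const_mul (A4 / μ)))
  have pw : ∀ (n : ℕ) (p : ℝ), HasDerivAt (fun t : ℝ => t ^ n) (n * p ^ (n - 1)) p :=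
    fun n p => hasDerivAt_pow n p
  -- derivatives of F
  have Fx := ((((a0.mul_const (px^4)).add ((a2.mul_const (px^2)).mul_const (py^2))).add
    (a4.mul_const (py^4))).const_mul (Ce * Real.cos (μ * y + φ0))).add
    ((((a1.mul_const (px^3)).mul_const py).add
      ((a3.mul_const px).mul_const (py^3))).const_mul (Ce * Real.sin (μ * y + φ0)))
  have Fy := ((hcos.const_mul Ce).mul_const (hypA0 μ A0 h x * px^4
      + hypA2 μ A0 A1 A2 h x * px^2 * py^2 + hypA4 μ A0 A1 A2 A3 A4 h x * py^4)).add
    ((hsin.const_mul Ce).mul_const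
      (hypA1 A0 A1 h x * px^3 * py + hypA3 μ A0 A1 A3 A4 h x * px * py^3))
  have Fpx := (((((pw 4 px).const_mul (hypA0 μ A0 h x)).add
      (((pw 2 px).const_mul (hypA2 μ A0 A1 A2 h x)).mul_const (py^2))).add_const
      (hypA4 μ A0 A1 A2 A3 A4 h x * py^4)).const_mul (Ce * Real.cos (μ * y + φ0))).add
    (((((pw 3 px).const_mul (hypA1 A0 A1 h x)).mul_const py).add
      (((hasDerivAt_id px).const_mul (hypA3 μ A0 A1 A3 A4 h x)).mul_const (py^3))).const_mul
        (Ce * Real.sin (μ * y + φ0)))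
  have Hx := ((h2.pow 2).const_mul (1/2)).mul_const (px^2 + py^2)
  have Hpx := ((pw 2 px).add_const (py^2)).const_mul ((1/2) * (deriv h x)^2)
  have Hpy := ((pw 2 py).const_add (px^2)).const_mul ((1/2) * (deriv h x)^2)
  have Hy : deriv (fun _ : ℝ => (1/2) * (deriv h x)^2 * (px^2 + py^2)) y = 0 :=
    deriv_const _ _
  have e1 := Fx.deriv
  have e2 := Fy.deriv
  have e3 := Fpx.deriv
  have e4 := Hx.deriv
  have e5 := Hpx.deriv
  have e6 := Hpy.deriv
  unfold pb
  beta_reduce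
  erw [e1, e2, e3, e4, e5, e6, Hy]
  clear e1 e2 e3 e4 e5 e6 Hy Fx Fy Fpx Hx Hpx Hpy a0 a1 a2 a3 a4 hC hS hcos hsin
  simp only [hypA0, hypA1, hypA2, hypA3, hypA4, Pi.pow_apply, Pi.mul_apply, Pi.sub_apply, Pi.add_apply]
  generalize deriv (deriv h) x = w at *
  generalize deriv h x = u at *
  generalize h x = k at *
  generalize Real.cosh (μ * x) = C at *
  generalize Real.sinh (μ * x) = S at *
  generalize Real.cos (μ * y + φ0) = c at *
  generalize Real.sin (μ * y + φ0) = s at *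
  norm_num
  have ode' : w * ((A0 * k - A1) * u^3 + A3 * C + A4 / μ * S) = -(A0 * u^5
    + (-(μ^2 / 2) * A0 * k^2 + μ^2 * A1 * k + A2) * u^3
        - μ * (A3 * S + A4 / μ * C) * u) := by linarith
  field_simp at ode ⊢
  linear_combination (-u*Ce*s*(px^2*py^3+py^5)) * ode
end

section
/- Let A₀, A₁, A₂, A₃, A₄ ∈ ℝ and let h : ℝ → ℝ be smooth with h'(x) ≠ 0 for all x, satisfying for all x ∈ ℝ the linear-case second-order equation ((A₀h − A₁)h'³ + A₃ + A₄x)·h'' + (A₀h'⁴ + A₂h'² − A₄)·h' = 0. Define a₀ = A₀h'⁴, a₁ = (A₁ − A₀h)h'³, a₂ = (2A₀h'² + A₂)h'², a₃ = (A₁ − A₀h)h'³ − (A₃ + A₄x), a₄ = −A₄ + A₂h'² + A₀h'⁴. Then the function F(x,y,p_x,p_y) = y·(a₀(x)p_x⁴ + a₂(x)p_x²p_y² + a₄(x)p_y⁴) + a₁(x)p_x³p_y + a₃(x)p_xp_y³ satisfies {F, H} = 0 identically on ℝ⁴, where H = (1/2)h'(x)²(p_x²+p_y²). -/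
/-- Coefficients of the quartic integral in the linear case (μ = 0). -/
noncomputable def linA0 (A0 : ℝ) (h : ℝ → ℝ) (x : ℝ) : ℝ := A0 * (deriv h x)^4

noncomputable def linA1 (A0 A1 : ℝ) (h : ℝ → ℝ) (x : ℝ) : ℝ :=
  (A1 - A0 * h x) * (deriv h x)^3

noncomputable def linA2 (A0 A2 : ℝ) (h : ℝ → ℝ) (x : ℝ) : ℝ :=
  (2 * A0 * (deriv h x)^2 + A2) * (deriv h x)^2

noncomputable def linA3 (A0 A1 A3 A4 : ℝ) (h : ℝ → ℝ) (x : ℝ) : ℝ :=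
  (A1 - A0 * h x) * (deriv h x)^3 - (A3 + A4 * x)

noncomputable def linA4 (A0 A2 A4 : ℝ) (h : ℝ → ℝ) (x : ℝ) : ℝ :=
  -A4 + A2 * (deriv h x)^2 + A0 * (deriv h x)^4

theorem stmt_11 (A0 A1 A2 A3 A4 : ℝ) (h : ℝ → ℝ)
    (hh : ContDiff ℝ (⊤ : ℕ∞) h) (hhx : ∀ x, deriv h x ≠ 0)
    (hode : ∀ x : ℝ,
      ((A0 * h x - A1) * (deriv h x)^3 + A3 + A4 * x) * deriv (deriv h) x
        + (A0 * (deriv h x)^4 + A2 * (deriv h x)^2 - A4) * deriv h x = 0) :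
    ∀ x y px py : ℝ,
      pb (fun x y px py =>
            y * (linA0 A0 h x * px^4 + linA2 A0 A2 h x * px^2 * py^2
                  + linA4 A0 A2 A4 h x * py^4)
            + linA1 A0 A1 h x * px^3 * py + linA3 A0 A1 A3 A4 h x * px * py^3)
         (fun x _y px py => (1/2) * (deriv h x)^2 * (px^2 + py^2))
         x y px py = 0 := by
  intro x y px py
  have d1 : HasDerivAt h (deriv h x) x :=
    (hh.differentiable (by simp)).differentiableAt.hasDerivAt
  have hc : ContDiff ℝ 1 (deriv h) := by
    have h2 : ContDiff ℝ (1 + 1) h := (contDiff_infty.mp hh 2)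
    exact (contDiff_succ_iff_deriv.mp h2).2.2
  have d2 : HasDerivAt (deriv h) (deriv (deriv h) x) x :=
    (hc.differentiable (by simp)).differentiableAt.hasDerivAt
  have ho := hode x
  simp only [pb, linA0, linA1, linA2, linA3, linA4]
  generalize deriv (deriv h) x = v at d2 ho
  generalize hg : deriv h = g at *
  have dP : ∀ a b c d e : ℝ, HasDerivAt
      (fun t : ℝ => y * (a * t^4 + b * t^2 * py^2 + c * py^4) + d * t^3 * py + e * t * py^3)
      (y * (4 * a * px^3 + 2 * b * px * py^2) + 3 * d * px^2 * py + e * py^3) px := by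
    intro a b c d e
    have i := hasDerivAt_id' px
    refine HasDerivAt.congr_deriv (((((((i.pow 4).const_mul a).add (((i.pow 2).const_mul b).mul_const (py^2))).add_const
      (c * py^4)).const_mul y).add (((i.pow 3).const_mul d).mul_const py)).add
      ((i.const_mul e).mul_const (py^3))) ?_
    push_cast; ring
  have dY : ∀ a b : ℝ, ∀ c, HasDerivAt (fun t : ℝ => t * a + b + c) a y := by
    intro a b c
    simpa using (((hasDerivAt_id' y).mul_const a).add_const b).add_const c
  have dHP : ∀ a : ℝ, HasDerivAt (fun t : ℝ => a * (t^2 + py^2)) (2 * a * px) px := by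
    intro a
    refine HasDerivAt.congr_deriv ((((hasDerivAt_id' px).pow 2).add_const (py^2)).const_mul a) ?_
    push_cast; ring
  have dHQ : ∀ a : ℝ, HasDerivAt (fun t : ℝ => a * (px^2 + t^2)) (2 * a * py) py := by
    intro a
    refine HasDerivAt.congr_deriv ((((hasDerivAt_id' py).pow 2).const_add (px^2)).const_mul a) ?_
    push_cast; ring
  have dHX : HasDerivAt (fun t : ℝ => 1/2 * (g t)^2 * (px^2 + py^2))
      (g x * v * (px^2 + py^2)) x := by
    refine HasDerivAt.congr_deriv (((d2.pow 2).const_mul (1/2)).mul_const (px^2 + py^2)) ?_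
    push_cast; ring
  have e1 : HasDerivAt (fun t => (A1 - A0 * h t) * (g t)^3)
      (-A0 * (g x)^4 + 3 * (A1 - A0 * h x) * (g x)^2 * v) x := by
    refine HasDerivAt.congr_deriv (((d1.const_mul A0).const_sub A1).mul (d2.pow 3)) ?_
    push_cast; ring
  have e3 := e1.sub (((hasDerivAt_id' x).const_mul A4).const_add A3)
  have e0 := (d2.pow 4).const_mul A0
  have e2 := (((d2.pow 2).const_mul (2 * A0)).add_const A2).mul (d2.pow 2)
  have e4 := (((d2.pow 2).const_mul A2).const_add (-A4)).add e0
  have dX := (((((e0.mul_const (px^4)).add ((e2.mul_const (px^2)).mul_const (py^2))).add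
    (e4.mul_const (py^4))).const_mul y).add ((e1.mul_const (px^3)).mul_const py)).add
    ((e3.mul_const px).mul_const (py^3))
  have dX' := dX.deriv
  simp only [Pi.add_def, Pi.mul_def, Pi.pow_def, Pi.sub_def] at dX'
  rw [(dP _ _ _ _ _).deriv, dHX.deriv, dX', (dHP _).deriv, (dY _ _ _).deriv, (dHQ _).deriv,
    deriv_const]
  push_cast
  linear_combination (-(g x)^1 * (px^2 * py^3 + py^5)) * ho
end

section
/- Let A₀, A₁, A₂, A₃, A₄ ∈ ℝ and let h : ℝ → ℝ be smooth with h'(x) ≠ 0 for all x, satisfying for all x ∈ ℝ the linear-case second-order equation ((A₀h − A₁)h'³ + A₃ + A₄x)·h'' + (A₀h'⁴ + A₂h'² − A₄)·h' = 0. Then: (1) there exists A₅ ∈ ℝ such that for all x ∈ ℝ: 2(A₀h − A₁)(A₃ + A₄x)h'³ + (A₄h(2A₁ − A₀h) + A₂x(2A₃ + A₄x) + A₅)h'² − (A₃ + A₄x)² = 0; and (2) there exists A₆ ∈ ℝ such that for all x ∈ ℝ: (A₀h − A₁)²h'³ + ((A₀h − 2A₁)A₂h + A₀x(2A₃ + A₄x)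 + A₆)h' − 2(A₀h − A₁)(A₃ + A₄x) = 0. -/
theorem stmt_14 (A0 A1 A2 A3 A4 : ℝ) (h : ℝ → ℝ)
    (hh : ContDiff ℝ (⊤ : ℕ∞) h) (hhx : ∀ x, deriv h x ≠ 0)
    (hode : ∀ x : ℝ,
      ((A0 * h x - A1) * (deriv h x)^3 + A3 + A4 * x) * deriv (deriv h) x
        + (A0 * (deriv h x)^4 + A2 * (deriv h x)^2 - A4) * deriv h x = 0) :
    (∃ A5 : ℝ, ∀ x : ℝ,
      2 * (A0 * h x - A1) * (A3 + A4 * x) * (deriv h x)^3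
        + (A4 * h x * (2 * A1 - A0 * h x) + A2 * x * (2 * A3 + A4 * x) + A5)
            * (deriv h x)^2
        - (A3 + A4 * x)^2 = 0)
    ∧ (∃ A6 : ℝ, ∀ x : ℝ,
      (A0 * h x - A1)^2 * (deriv h x)^3
        + ((A0 * h x - 2 * A1) * A2 * h x + A0 * x * (2 * A3 + A4 * x) + A6)
            * deriv h x
        - 2 * (A0 * h x - A1) * (A3 + A4 * x) = 0) := by
  have hd : ∀ x, HasDerivAt h (deriv h x) x := fun x =>
    (hh.differentiable (by simp)).differentiableAt.hasDerivAt
  have hh2 : ContDiff ℝ 2 h := by exact_mod_cast contDiff_infty.1 hh 2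
  have hp1 : ContDiff ℝ 1 (deriv h) := by
    have h2 : ContDiff ℝ (1 + 1) h := by
      rw [one_add_one_eq_two]; exact hh2
    exact (contDiff_succ_iff_deriv.1 h2).2.2
  have hp : ∀ x, HasDerivAt (deriv h) (deriv (deriv h) x) x := fun x =>
    (hp1.differentiable (by simp)).differentiableAt.hasDerivAt
  have hconst : ∀ F : ℝ → ℝ, (∀ x, HasDerivAt F 0 x) → ∀ x, F x = F 0 := fun F hF x =>
    is_const_of_deriv_eq_zero (fun x => (hF x).differentiableAt) (fun x => (hF x).deriv) x 0
  have hL : ∀ x, HasDerivAt (fun x : ℝ => A3 + A4 * x) A4 x := fun x => by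
    simpa using ((hasDerivAt_id x).const_mul A4).const_add A3
  have hM : ∀ x, HasDerivAt (fun x : ℝ => x * (2 * A3 + A4 * x)) (2 * (A3 + A4 * x)) x :=
    fun x => by
      have := (hasDerivAt_id x).mul (((hasDerivAt_id x).const_mul A4).const_add (2 * A3))
      refine this.congr_deriv ?_
      simp only [id]; ring
  have hu : ∀ x, HasDerivAt (fun x : ℝ => A0 * h x - A1) (A0 * deriv h x) x := fun x =>
    ((hd x).const_mul A0).sub_const A1
  constructor
  · let F : ℝ → ℝ := fun x => 2 * ((A0 * h x - A1) * (A3 + A4 * x) * deriv h x)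
      + A4 * (h x * (2 * A1 - A0 * h x)) + A2 * (x * (2 * A3 + A4 * x))
      - (A3 + A4 * x)^2 / (deriv h x)^2
    have hF : ∀ x, HasDerivAt F 0 x := fun x => by
      have e := ((((((hu x).mul (hL x)).mul (hp x)).const_mul 2).add
        (((hd x).mul (((hd x).const_mul A0).const_sub (2 * A1))).const_mul A4)).add
        ((hM x).const_mul A2)).sub (((hL x).pow 2).div ((hp x).pow 2) (pow_ne_zero 2 (hhx x)))
      refine e.congr_deriv ?_
      have h0 := hhx x
      have ho := hode x
      simp only [Pi.mul_apply, Pi.pow_apply]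
      field_simp
      push_cast
      linear_combination (2 * (A3 + A4 * x) * deriv h x) * ho
    refine ⟨-F 0, fun x => ?_⟩
    rw [← hconst F hF x]
    have h0 := hhx x
    simp only [F]
    field_simp
    ring
  · let F : ℝ → ℝ := fun x => (A0 * h x - A1)^2 * (deriv h x)^2
      + A2 * ((A0 * h x - 2 * A1) * h x) + A0 * (x * (2 * A3 + A4 * x))
      - 2 * ((A0 * h x - A1) * (A3 + A4 * x) / deriv h x)
    have hF : ∀ x, HasDerivAt F 0 x := fun x => by
      have e := (((((hu x).pow 2).mul ((hp x).pow 2)).add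
        (((((hd x).const_mul A0).sub_const (2 * A1)).mul (hd x)).const_mul A2)).add
        ((hM x).const_mul A0)).sub ((((hu x).mul (hL x)).div (hp x) (hhx x)).const_mul 2)
      refine e.congr_deriv ?_
      have h0 := hhx x
      have ho := hode x
      simp only [Pi.mul_apply, Pi.pow_apply]
      field_simp
      push_cast
      linear_combination (2 * (A0 * h x - A1)) * ho
    refine ⟨-F 0, fun x => ?_⟩
    rw [← hconst F hF x]
    have h0 := hhx x
    simp only [F]
    field_simp
    ring
end

section
/- Let A₀, A₁, A₂, A₄ ∈ ℝ and let h : ℝ → ℝ be smooth with h'(x) ≠ 0 and h''(x) ≠ 0 for all x, satisfying for all x ∈ ℝ the third-order equation (A₀h'⁴ + A₂h'² − A₄)·h''' − 3(A₀h − A₁)h'·(h'')³ − 3(2A₀h'² + A₂)h'·(h'')² = 0. Then there exists a real constant A₃ such that for all x ∈ ℝ: ((A₀h − A₁)h'³ + A₃ + A₄x)·h'' + (A₀h'⁴ + A₂h'² − A₄)·h' = 0. -/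
theorem stmt_15 (A0 A1 A2 A4 : ℝ) (h : ℝ → ℝ)
    (hh : ContDiff ℝ (⊤ : ℕ∞) h) (hhx : ∀ x, deriv h x ≠ 0)
    (hhxx : ∀ x, deriv (deriv h) x ≠ 0)
    (hode : ∀ x : ℝ,
      (A0 * (deriv h x)^4 + A2 * (deriv h x)^2 - A4) * deriv (deriv (deriv h)) x
        - 3 * (A0 * h x - A1) * deriv h x * (deriv (deriv h) x)^3
        - 3 * (2 * A0 * (deriv h x)^2 + A2) * deriv h x * (deriv (deriv h) x)^2
        = 0) :
    ∃ A3 : ℝ, ∀ x : ℝ,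
      ((A0 * h x - A1) * (deriv h x)^3 + A3 + A4 * x) * deriv (deriv h) x
        + (A0 * (deriv h x)^4 + A2 * (deriv h x)^2 - A4) * deriv h x = 0 := by
  have h1 : ContDiff ℝ (⊤ : ℕ∞) (deriv h) := (contDiff_infty_iff_deriv.mp hh).2
  have h2 : ContDiff ℝ (⊤ : ℕ∞) (deriv (deriv h)) := (contDiff_infty_iff_deriv.mp h1).2
  have d0 : ∀ x, HasDerivAt h (deriv h x) x := fun x =>
    ((contDiff_infty_iff_deriv.mp hh).1 x).hasDerivAt
  have d1 : ∀ x, HasDerivAt (deriv h) (deriv (deriv h) x) x := fun x =>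
    ((contDiff_infty_iff_deriv.mp h1).1 x).hasDerivAt
  have d2 : ∀ x, HasDerivAt (deriv (deriv h)) (deriv (deriv (deriv h)) x) x := fun x =>
    ((contDiff_infty_iff_deriv.mp h2).1 x).hasDerivAt
  generalize deriv (deriv (deriv h)) = r at *
  generalize deriv (deriv h) = q at *
  generalize deriv h = p at *
  let F : ℝ → ℝ := fun x => (A0 * h x - A1) * (p x)^3 + A4 * x
    + (A0 * (p x)^4 + A2 * (p x)^2 - A4) * p x / q x
  have hF : ∀ x, HasDerivAt F 0 x := by
    intro x
    have e := (((((d0 x).const_mul A0).sub_const A1).mul ((d1 x).pow 3)).add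
      ((hasDerivAt_id x).const_mul A4)).add
      ((((((((d1 x).pow 4).const_mul A0).add (((d1 x).pow 2).const_mul A2)).sub_const A4).mul
        (d1 x))).div (d2 x) (hhxx x))
    refine HasDerivAt.congr_deriv e ?_
    have hq := hhxx x
    have ho := hode x
    simp only [Pi.pow_apply, Pi.add_apply, Pi.mul_apply, Pi.sub_apply]
    field_simp
    push_cast
    norm_num
    linear_combination (-p x) * ho
  have hc : ∀ x, F x = F 0 := fun x =>
    is_const_of_deriv_eq_zero (fun y => (hF y).differentiableAt) (fun y => (hF y).deriv) x 0
  refine ⟨-F 0, fun x => ?_⟩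
  have hq := hhxx x
  rw [← hc x]
  simp only [F]
  field_simp
  ring
end

section
/- Let A₀, A₂, A₄ ∈ ℝ, let h : ℝ → ℝ be smooth with h'(x) ≠ 0 for all x, let a₀, a₁, a₂, a₃, a₄ : ℝ → ℝ be smooth, and define F(x,y,p_x,p_y) = (a₀(x) + yA₀h'(x)⁴)p_x⁴ + a₁(x)p_x³p_y + (a₂(x) + y(2A₀h'(x)² + A₂)h'(x)²)p_x²p_y² + a₃(x)p_xp_y³ + (a₄(x) + y(A₀h'(x)⁴ + A₂h'(x)² − A₄))p_y⁴, and H(x,y,p_x,p_y) = (1/2)h'(x)²(p_x²+p_y²). Then {F, H} = 0 identically on ℝ⁴ if and only if for every x ∈ ℝ the following six equations hold: a₀'h' − 4a₀h'' = 0; a₁'h' − 3a₁h'' + A₀h'⁵ = 0; a₂'h' − 2a₂h'' − 4a₀h'' = 0; a₃'h' − a₃h'' − 3a₁h'' + 2A₀h'⁵ + A₂h'³ = 0; a₄'h' − 2a₂h'' = 0; a₃h'' − A₀h'⁵ − A₂h'³ + A₄h' = 0. -/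
theorem stmt_16 (A0 A2 A4 : ℝ) (h a0 a1 a2 a3 a4 : ℝ → ℝ)
    (hh : ContDiff ℝ (⊤ : ℕ∞) h) (hhx : ∀ x, deriv h x ≠ 0)
    (ha0 : ContDiff ℝ (⊤ : ℕ∞) a0) (ha1 : ContDiff ℝ (⊤ : ℕ∞) a1) (ha2 : ContDiff ℝ (⊤ : ℕ∞) a2)
    (ha3 : ContDiff ℝ (⊤ : ℕ∞) a3) (ha4 : ContDiff ℝ (⊤ : ℕ∞) a4) :
    (∀ x y px py : ℝ,
      pb (fun x y px py =>
            (a0 x + y * (A0 * (deriv h x)^4)) * px^4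
            + a1 x * px^3 * py
            + (a2 x + y * ((2 * A0 * (deriv h x)^2 + A2) * (deriv h x)^2))
                * px^2 * py^2
            + a3 x * px * py^3
            + (a4 x + y * (A0 * (deriv h x)^4 + A2 * (deriv h x)^2 - A4)) * py^4)
         (fun x _y px py => (1/2) * (deriv h x)^2 * (px^2 + py^2))
         x y px py = 0)
    ↔ (∀ x : ℝ,
        deriv a0 x * deriv h x - 4 * a0 x * deriv (deriv h) x = 0
      ∧ deriv a1 x * deriv h x - 3 * a1 x * deriv (deriv h) x
          + A0 * (deriv h x)^5 = 0
      ∧ deriv a2 x * deriv h x - 2 * a2 x * deriv (deriv h) x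
          - 4 * a0 x * deriv (deriv h) x = 0
      ∧ deriv a3 x * deriv h x - a3 x * deriv (deriv h) x
          - 3 * a1 x * deriv (deriv h) x + 2 * A0 * (deriv h x)^5
          + A2 * (deriv h x)^3 = 0
      ∧ deriv a4 x * deriv h x - 2 * a2 x * deriv (deriv h) x = 0
      ∧ a3 x * deriv (deriv h) x - A0 * (deriv h x)^5 - A2 * (deriv h x)^3
          + A4 * deriv h x = 0) := by
  have dh : ∀ x, HasDerivAt (deriv h) (deriv (deriv h) x) x := by
    intro x
    have h2 := (contDiff_infty_iff_deriv.mp hh).2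
    exact (h2.differentiable (by simp) x).hasDerivAt
  have d0 : ∀ x, HasDerivAt a0 (deriv a0 x) x := fun x => (ha0.differentiable (by simp) x).hasDerivAt
  have d1 : ∀ x, HasDerivAt a1 (deriv a1 x) x := fun x => (ha1.differentiable (by simp) x).hasDerivAt
  have d2 : ∀ x, HasDerivAt a2 (deriv a2 x) x := fun x => (ha2.differentiable (by simp) x).hasDerivAt
  have d3 : ∀ x, HasDerivAt a3 (deriv a3 x) x := fun x => (ha3.differentiable (by simp) x).hasDerivAt
  have d4 : ∀ x, HasDerivAt a4 (deriv a4 x) x := fun x => (ha4.differentiable (by simp) x).hasDerivAt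
  have key : ∀ x y p q : ℝ,
      pb (fun x y px py =>
            (a0 x + y * (A0 * (deriv h x)^4)) * px^4
            + a1 x * px^3 * py
            + (a2 x + y * ((2 * A0 * (deriv h x)^2 + A2) * (deriv h x)^2))
                * px^2 * py^2
            + a3 x * px * py^3
            + (a4 x + y * (A0 * (deriv h x)^4 + A2 * (deriv h x)^2 - A4)) * py^4)
         (fun x _y px py => (1/2) * (deriv h x)^2 * (px^2 + py^2))
         x y p q = deriv h x * (-(
        (deriv a0 x * deriv h x - 4 * a0 x * deriv (deriv h) x) * p^5
      + (deriv a1 x * deriv h x - 3 * a1 x * deriv (deriv h) x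
          + A0 * (deriv h x)^5) * (p^4 * q)
      + (deriv a2 x * deriv h x - 2 * a2 x * deriv (deriv h) x
          - 4 * a0 x * deriv (deriv h) x) * (p^3 * q^2)
      + (deriv a3 x * deriv h x - a3 x * deriv (deriv h) x
          - 3 * a1 x * deriv (deriv h) x + 2 * A0 * (deriv h x)^5
          + A2 * (deriv h x)^3) * (p^2 * q^3)
      + (deriv a4 x * deriv h x - 2 * a2 x * deriv (deriv h) x) * (p * q^4)
      - (a3 x * deriv (deriv h) x - A0 * (deriv h x)^5 - A2 * (deriv h x)^3
          + A4 * deriv h x) * q^5)) := by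
    intro x y p q
    have ip := hasDerivAt_id' p
    have iq := hasDerivAt_id' q
    have iy := hasDerivAt_id' y
    have u := dh x
    have Hx := ((u.pow 2).const_mul (1/2)).mul_const (p^2+q^2)
    have Hp := ((ip.pow 2).add_const (q^2)).const_mul ((1/2) * (deriv h x)^2)
    have Hq := ((iq.pow 2).const_add (p^2)).const_mul ((1/2) * (deriv h x)^2)
    have Fx := ((((((d0 x).add (((u.pow 4).const_mul A0).const_mul y)).mul_const (p^4)).add
      (((d1 x).mul_const (p^3)).mul_const q)).add
      ((((d2 x).add (((((u.pow 2).const_mul (2*A0)).add_const A2).mul (u.pow 2)).const_mul y)).mul_const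
        (p^2)).mul_const (q^2))).add (((d3 x).mul_const p).mul_const (q^3))).add
      (((d4 x).add (((((u.pow 4).const_mul A0).add ((u.pow 2).const_mul A2)).sub_const A4).const_mul
        y)).mul_const (q^4))
    have lin : ∀ a b : ℝ, HasDerivAt (fun t => a + t * b) (1 * b) y :=
      fun a b => (iy.mul_const b).const_add a
    have Fy := (((((lin (a0 x) (A0 * (deriv h x)^4)).mul_const (p^4)).add_const (a1 x * p^3 * q)).add
      (((lin (a2 x) ((2 * A0 * (deriv h x)^2 + A2) * (deriv h x)^2)).mul_const (p^2)).mul_const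
        (q^2))).add_const (a3 x * p * q^3)).add
      ((lin (a4 x) (A0 * (deriv h x)^4 + A2 * (deriv h x)^2 - A4)).mul_const (q^4))
    have Fp : ∀ c0 c1 c2 c3 c4 : ℝ, HasDerivAt (fun t => c0 * t^4 + c1 * t^3 * q + c2 * t^2 * q^2
        + c3 * t * q^3 + c4 * q^4) (4*c0*p^3+3*c1*p^2*q+2*c2*p*q^2+c3*q^3) p := by
      intro c0 c1 c2 c3 c4
      have := ((((((ip.pow 4).const_mul c0).add (((ip.pow 3).const_mul c1).mul_const q)).add
        (((ip.pow 2).const_mul c2).mul_const (q^2))).add ((ip.const_mul c3).mul_const (q^3))).add_const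
        (c4 * q^4))
      refine this.congr_deriv ?_
      push_cast
      ring
    have Hy : deriv (fun _ : ℝ => (1/2) * (deriv h x)^2 * (p^2 + q^2)) y = 0 := deriv_const _ _
    unfold pb
    have e1 := Hx.deriv
    have e2 := Hp.deriv
    have e3 := Hq.deriv
    have e4 := Fx.deriv
    have e5 := Fy.deriv
    simp only [Pi.add_def, Pi.mul_def, Pi.pow_def, Pi.sub_def] at e1 e2 e3 e4 e5
    simp only [(Fp _ _ _ _ _).deriv, Hy]
    rw [e1, e2, e3, e4, e5]
    push_cast
    ring
  simp only [key]
  constructor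
  · intro H x
    have H' : ∀ p q : ℝ, _ := fun p q => (mul_eq_zero.mp (H x 0 p q)).resolve_left (hhx x)
    have h1 := H' 1 0
    have h2 := H' 0 1
    have h3 := H' 1 1
    have h4 := H' (-1) 1
    have h5 := H' 2 1
    have h6 := H' (-2) 1
    clear H H' key
    refine ⟨?_, ?_, ?_, ?_, ?_, ?_⟩ <;> linarith
  · intro H x y p q
    obtain ⟨h1, h2, h3, h4, h5, h6⟩ := H x
    rw [h1, h2, h3, h4, h5, h6]
    ring
end

section
/- Let μ ∈ ℝ, μ ≠ 0, let A₀, A₁, A₂, A₃, A₄ ∈ ℝ, let λ ∈ ℝ, λ ≠ 0, and let h : ℝ → ℝ be smooth satisfying for all x ∈ ℝ the trigonometric second-order equation with parameters (μ, A₀, A₁, A₂, A₃, A₄): ((A₀h − A₁)h'³ + A₃cos(μx) + (A₄/μ)sin(μx))·h'' + A₀h'⁵ + ((μ²/2)A₀h² − μ²A₁h + A₂)·h'³ + μ(A₃sin(μx) − (A₄/μ)cos(μx))·h' = 0. Then the function λ·h satisfies for all x ∈ ℝ the trigonometric second-order equation with parameters (μ, A₀/λ, A₁, λA₂, λ³A₃,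 λ³A₄). -/
/-- The trigonometric second-order equation with parameters (μ, A₀, A₁, A₂, A₃, A₄),
stated for a function `h` at every point `x`. -/
def TrigODE (μ A0 A1 A2 A3 A4 : ℝ) (h : ℝ → ℝ) : Prop :=
  ∀ x : ℝ,
    ((A0 * h x - A1) * (deriv h x)^3
        + A3 * Real.cos (μ * x) + A4 / μ * Real.sin (μ * x)) * deriv (deriv h) x
      + A0 * (deriv h x)^5
      + (μ^2 / 2 * A0 * (h x)^2 - μ^2 * A1 * h x + A2) * (deriv h x)^3
      + μ * (A3 * Real.sin (μ * x) - A4 / μ * Real.cos (μ * x)) * deriv h x = 0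

theorem stmt_18 (μ A0 A1 A2 A3 A4 lam : ℝ) (hμ : μ ≠ 0) (hlam : lam ≠ 0) (h : ℝ → ℝ)
    (hh : ContDiff ℝ (⊤ : ℕ∞) h)
    (hode : TrigODE μ A0 A1 A2 A3 A4 h) :
    TrigODE μ (A0 / lam) A1 (lam * A2) (lam^3 * A3) (lam^3 * A4)
      (fun x => lam * h x) := by
  intro x
  have h1 : deriv (fun x => lam * h x) = fun x => lam * deriv h x := by
    funext y
    exact deriv_const_mul_field lam
  have h2 : deriv (fun x => lam * deriv h x) x = lam * deriv (deriv h) x :=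
    deriv_const_mul_field lam
  have e := hode x
  rw [h1, h2]
  have e1 : A0 / lam * (lam * h x) = A0 * h x := by field_simp
  have e2 : A0 / lam * (lam * deriv h x)^5 = lam^4 * (A0 * (deriv h x)^5) := by field_simp
  have e3 : μ^2 / 2 * (A0 / lam) * (lam * h x)^2 = lam * (μ^2 / 2 * A0 * (h x)^2) := by
    field_simp
  simp only [e1, e2, e3]
  linear_combination lam^4 * e
end
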